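/- Let g be a finite-dimensional simple Lie algebra over ℂ, let L(g) = ℂ[t,t⁻¹] ⊗ g be its loop algebra, and let V be an irreducible finite-dimensional L(g)-module. Then the annihilator Ann(V) = {z ∈ L(g) : z·v = 0 for all v ∈ V} equals I ⊗ g for some nonzero radical ideal I of ℂ[t,t⁻¹]; equivalently, Ann(V) = f·ℂ[t,t⁻¹] ⊗ g where f = (t−a₁)⋯(t−a_k) for some k ≥ 0 and pairwise distinct a₁, …, a_k ∈ ℂ×. -/

import Mathlib

open scoped TensorProduct

/-- The base ring `ℂ` acts as a Lie algebra of scalars on the loop algebra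
`ℂ[t,t⁻¹] ⊗[ℂ] g`. -/
noncomputable instance loopLieAlgebra (B : Type*) [CommRing B] [Algebra ℂ B]
    (g : Type) [LieRing g] [LieAlgebra ℂ g] : LieAlgebra ℂ (B ⊗[ℂ] g) where
  lie_smul c x y := by
    rw [← algebraMap_smul B c y, lie_smul, algebraMap_smul]


open LaurentPolynomial in
lemma loopAux_dens (g : Type) [LieRing g]
    [LieAlgebra ℂ g] [FiniteDimensional ℂ g] [LieAlgebra.IsSimple ℂ g]
    (A : Subalgebra ℂ (Module.End ℂ g)) (hA : ∀ x : g, LieAlgebra.ad ℂ g x ∈ A) : A = ⊤ := by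
  have hnt : Nontrivial g := LieAlgebra.IsSimple.nontrivial ℂ g
  have hs : IsSimpleModule A g := by
    refine (isSimpleModule_iff A g).2 ?_
    refine @IsSimpleOrder.mk _ _ _ ?_ ?_
    · infer_instance
    · intro N
      let N' : LieIdeal ℂ g :=
        { N.restrictScalars ℂ with
          lie_mem := by
            intro x m hm
            exact N.smul_mem ⟨_, hA x⟩ hm }
      rcases LieAlgebra.IsSimple.eq_bot_or_eq_top (R := ℂ) N' with h | h
      · left
        ext m
        have : m ∈ N' ↔ m ∈ (⊥ : LieIdeal ℂ g) := by rw [h]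
        exact this.trans (by simp)
      · right
        ext m
        have : m ∈ N' ↔ m ∈ (⊤ : LieIdeal ℂ g) := by rw [h]
        exact this.trans (by simp)
  rw [eq_top_iff]
  intro f _
  have hsch := (IsSimpleModule.algebraMap_end_bijective_of_isAlgClosed (A := A) (V := g) ℂ).2
  let f' : Module.End (Module.End A g) g :=
    { f with
      map_smul' := by
        intro c m
        obtain ⟨c, rfl⟩ := hsch c
        simp }
  classical
  let b := Module.finBasis ℂ g
  obtain ⟨r, hr⟩ := jacobson_density (R := A) f' (Finset.univ.image b)
  have : f = r := by
    refine b.ext fun i => ?_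
    exact hr (b i) (by simp)
  rw [this]
  exact r.2

lemma loopAux_perf (g : Type) [LieRing g] [LieAlgebra ℂ g] [LieAlgebra.IsSimple ℂ g]
    (P : Submodule ℂ g) (hP : ∀ x y : g, ⁅x, y⁆ ∈ P) : P = ⊤ := by
  have h1 : LieSubmodule.toSubmodule ⁅(⊤ : LieIdeal ℂ g), (⊤ : LieIdeal ℂ g)⁆ ≤ P := by
    rw [LieSubmodule.lieIdeal_oper_eq_linear_span', Submodule.span_le]
    rintro _ ⟨x, _, y, _, rfl⟩
    exact hP x y
  rcases LieAlgebra.IsSimple.eq_bot_or_eq_top (R := ℂ) ⁅(⊤ : LieIdeal ℂ g), (⊤ : LieIdeal ℂ g)⁆ with h | h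
  · exfalso
    apply LieAlgebra.IsSimple.non_abelian ℂ (L := g)
    constructor
    intro x y
    have := LieSubmodule.lie_mem_lie (LieSubmodule.mem_top (R := ℂ) (L := g) x)
      (LieSubmodule.mem_top (R := ℂ) (L := g) y)
    rw [h] at this
    simpa using this
  · rw [h] at h1
    simpa using h1

/-- ideals of `B ⊗ g` -/
lemma loopAux_ideal (B : Type) [CommRing B] [Algebra ℂ B] (g : Type) [LieRing g]
    [LieAlgebra ℂ g] [FiniteDimensional ℂ g] [LieAlgebra.IsSimple ℂ g]
    (J : Submodule ℂ (B ⊗[ℂ] g)) (hJ : ∀ y z : B ⊗[ℂ] g, z ∈ J → ⁅y, z⁆ ∈ J) :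
    ∃ I : Ideal B, (∀ p, p ∈ I ↔ ∀ x : g, p ⊗ₜ[ℂ] x ∈ J) ∧
      J = Submodule.span ℂ {w : B ⊗[ℂ] g | ∃ p ∈ I, ∃ x : g, w = p ⊗ₜ[ℂ] x} := by
  let A : Subalgebra ℂ (Module.End ℂ g) :=
    { carrier := {a | ∀ z ∈ J, LinearMap.lTensor B a z ∈ J}
      mul_mem' := by
        intro a b ha hb z hz
        rw [Module.End.mul_eq_comp, LinearMap.lTensor_comp]
        exact ha _ (hb _ hz)
      add_mem' := by
        intro a b ha hb z hz
        rw [LinearMap.lTensor_add]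
        exact J.add_mem (ha _ hz) (hb _ hz)
      algebraMap_mem' := by
        intro c z hz
        rw [Module.algebraMap_end_eq_smul_id, LinearMap.lTensor_smul, LinearMap.lTensor_id]
        exact J.smul_mem c hz }
  have hA : A = ⊤ := by
    apply loopAux_dens
    intro x z hz
    have : LinearMap.lTensor B (LieAlgebra.ad ℂ g x) z = ⁅(1 : B) ⊗ₜ[ℂ] x, z⁆ := by
      clear hz
      induction z with
      | zero => simp
      | tmul p y => simp
      | add u v hu hv => rw [map_add, hu, hv, lie_add]
    rw [this]
    exact hJ _ _ hz
  have hA' : ∀ (a : Module.End ℂ g), ∀ z ∈ J, LinearMap.lTensor B a z ∈ J := by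
    intro a
    have : a ∈ A := hA ▸ Algebra.mem_top
    exact this
  let I : Ideal B :=
    { carrier := {p | ∀ x : g, p ⊗ₜ[ℂ] x ∈ J}
      zero_mem' := by intro x; simp
      add_mem' := by
        intro a b ha hb x
        rw [TensorProduct.add_tmul]
        exact J.add_mem (ha x) (hb x)
      smul_mem' := by
        intro q p hp x
        have : J.comap (TensorProduct.mk ℂ B g (q * p)) = ⊤ := by
          apply loopAux_perf
          intro y z
          have := hJ (q ⊗ₜ y) (p ⊗ₜ z) (hp z)
          simpa using this
        have h2 : x ∈ J.comap (TensorProduct.mk ℂ B g (q * p)) := this ▸ Submodule.mem_top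
        exact h2 }
  refine ⟨I, fun p => Iff.rfl, le_antisymm ?_ ?_⟩
  · intro z hz
    let b := Module.finBasis ℂ g
    obtain ⟨c, hc⟩ : ∃ c : Fin (Module.finrank ℂ g) → B, z = ∑ i, c i ⊗ₜ[ℂ] b i := by
      clear hz
      induction z with
      | zero => exact ⟨0, by simp⟩
      | tmul p y =>
        refine ⟨fun i => b.repr y i • p, ?_⟩
        conv_lhs => rw [← b.sum_repr y, TensorProduct.tmul_sum]
        exact Finset.sum_congr rfl fun i _ => (TensorProduct.smul_tmul _ _ _).symm
      | add u v hu hv =>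
        obtain ⟨c, rfl⟩ := hu
        obtain ⟨d, rfl⟩ := hv
        exact ⟨c + d, by simp [TensorProduct.add_tmul, Finset.sum_add_distrib]⟩
    rw [hc]
    refine Submodule.sum_mem _ fun i _ => Submodule.subset_span ⟨c i, ?_, b i, rfl⟩
    intro x
    have := hA' (b.constr ℂ (Pi.single i x)) z hz
    rw [hc, map_sum] at this
    simp only [LinearMap.lTensor_tmul, Module.Basis.constr_basis] at this
    rw [Finset.sum_eq_single i] at this
    · simpa using this
    · intro j _ hj
      simp [Pi.single_eq_of_ne hj]
    · simp
  · rw [Submodule.span_le]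
    rintro _ ⟨p, hp, x, rfl⟩
    exact hp x

open Polynomial in
lemma loopAux_gen (I : Ideal (LaurentPolynomial ℂ)) (h0 : I ≠ ⊥) (hI : I.IsRadical) :
    ∃ (k : ℕ) (a : Fin k → ℂ), Function.Injective a ∧ (∀ i, a i ≠ 0) ∧
      I = Ideal.span {∏ i, (LaurentPolynomial.T 1 - LaurentPolynomial.C (a i))} := by
  have hmap : (I.comap (algebraMap ℂ[X] (LaurentPolynomial ℂ))).map
      (algebraMap ℂ[X] (LaurentPolynomial ℂ)) = I :=
    IsLocalization.map_under (Submonoid.powers (X : ℂ[X])) (LaurentPolynomial ℂ) I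
  set I' := I.comap (algebraMap ℂ[X] (LaurentPolynomial ℂ)) with hI'
  obtain ⟨h, hh⟩ := (IsPrincipalIdealRing.principal I').principal
  change I' = Ideal.span {h} at hh
  have hne : h ≠ 0 := by
    rintro rfl
    apply h0
    rw [← hmap, hh]
    simp
  have hrad : I'.IsRadical := hI.comap _
  have hsq : Squarefree h := by
    apply IsRadical.squarefree hne
    rw [isRadical_iff_span_singleton, ← hh]
    exact hrad
  have hnd : h.roots.Nodup := nodup_roots (PerfectField.separable_iff_squarefree.2 hsq)
  have hsplit := IsAlgClosed.splits h
  have hprod : h = C h.leadingCoeff * (h.roots.map fun a => X - C a).prod :=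
    hsplit.eq_prod_roots
  have hz : (0 : ℂ) ∉ h.roots := by
    intro hz
    have hr : h.IsRoot 0 := (mem_roots hne).1 hz
    obtain ⟨q, hq⟩ := dvd_iff_isRoot.2 hr
    simp only [map_zero, sub_zero] at hq
    have : q ∈ I' := by
      have h1 : h ∈ I' := hh ▸ Ideal.mem_span_singleton_self h
      rw [hI', Ideal.mem_comap] at h1 ⊢
      rw [hq, map_mul] at h1
      exact (Ideal.unit_mul_mem_iff_mem I
        (IsLocalization.map_units (LaurentPolynomial ℂ)
          (⟨X, Submonoid.mem_powers X⟩ : Submonoid.powers (X : ℂ[X])))).1 h1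
    rw [hh, Ideal.mem_span_singleton] at this
    obtain ⟨r, hr⟩ := this
    have hq0 : q ≠ 0 := by rintro rfl; exact hne (by simpa using hq)
    have : q * (X * r - 1) = 0 := by
      have : q = X * q * r := hq ▸ hr
      linear_combination -this
    rcases mul_eq_zero.1 this with h | h
    · exact hq0 h
    · have := congrArg (eval 0) h
      simp at this
  let e := h.roots.toFinset.equivFin.symm
  refine ⟨_, fun i => (e i : ℂ), Subtype.val_injective.comp e.injective, ?_, ?_⟩
  · intro i hi
    have := (e i).2
    rw [show (e i : ℂ) = 0 from hi, Multiset.mem_toFinset] at this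
    exact hz this
  · rw [← hmap, hh, Ideal.map_span, Set.image_singleton]
    have h1 : (∏ i, (LaurentPolynomial.T 1 - LaurentPolynomial.C (e i : ℂ))) =
        algebraMap ℂ[X] (LaurentPolynomial ℂ) (h.roots.map fun a => X - C a).prod := by
      rw [e.prod_comp (fun a : h.roots.toFinset => (LaurentPolynomial.T 1 - LaurentPolynomial.C (a : ℂ)))]
      rw [Finset.prod_coe_sort h.roots.toFinset (fun a : ℂ => (LaurentPolynomial.T 1 - LaurentPolynomial.C a))]
      have : (h.roots.map fun a => X - C a).prod = ∏ a ∈ h.roots.toFinset, (X - C a) := by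
        rw [Finset.prod, Multiset.toFinset_val, hnd.dedup]
      rw [this, map_prod]
      simp [LaurentPolynomial.algebraMap_eq_toLaurent]
    rw [h1]
    conv_lhs => rw [hprod, map_mul]
    refine Ideal.span_singleton_mul_left_unit ?_ _
    refine IsUnit.map _ (isUnit_C.2 ?_)
    simpa using hne


section

attribute [local instance] LieRing.ofAssociativeRing

lemma loopAux_main (L V : Type) [LieRing L] [LieAlgebra ℂ L]
    [AddCommGroup V] [Module ℂ V] [LieRingModule L V] [LieModule ℂ L V]
    [FiniteDimensional ℂ V] (hV : LieModule.IsIrreducible ℂ L V)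
    (N : LieIdeal ℂ L) (hN : ∀ x ∈ N, ∀ y ∈ N, ∀ v : V, ⁅⁅x, y⁆, v⁆ = 0) :
    ∀ x ∈ N, ∀ y : L, ∀ v : V, ⁅⁅y, x⁆, v⁆ = 0 := by
  let φ := LieModule.toEnd ℂ L V
  let R := φ.range
  have hnt : Nontrivial V := LieModule.nontrivial_of_isIrreducible ℂ L V
  have hirr : LieModule.IsIrreducible ℂ R V := by
    refine LieModule.IsIrreducible.mk fun P hP => ?_
    let P' : LieSubmodule ℂ L V :=
      { P.toSubmodule with
        lie_mem := by
          intro x m hm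
          exact P.lie_mem (x := ⟨φ x, ⟨x, rfl⟩⟩) hm }
    rcases hV.eq_bot_or_eq_top P' with h | h
    · exfalso
      apply hP
      ext m
      have : m ∈ P' ↔ m ∈ (⊥ : LieSubmodule ℂ L V) := by rw [h]
      exact this.trans (by simp)
    · ext m
      have : m ∈ P' ↔ m ∈ (⊤ : LieSubmodule ℂ L V) := by rw [h]
      exact this.trans (by simp)
  have hfaith : LieModule.IsFaithful ℂ R V := by
    rw [LieModule.isFaithful_iff']
    rintro ⟨x, hx⟩ h
    ext m
    exact h m
  obtain ⟨hc, -⟩ := LieAlgebra.hasCentralRadical_and_of_isIrreducible_of_isFaithful ℂ R V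
  let M : LieIdeal ℂ R :=
    { (N.toSubmodule.map (φ : L →ₗ[ℂ] Module.End ℂ V)).comap R.toSubmodule.subtype with
      lie_mem := by
        rintro ⟨_, ⟨y, rfl⟩⟩ ⟨_, _⟩ ⟨x, hx, rfl⟩
        exact ⟨⁅y, x⁆, N.lie_mem hx, φ.map_lie y x⟩ }
  have hM : IsLieAbelian M := by
    constructor
    rintro ⟨⟨a, ha⟩, ha'⟩ ⟨⟨b, hb⟩, hb'⟩
    obtain ⟨x, hx, hxa⟩ := ha'
    obtain ⟨y, hy, hyb⟩ := hb'
    replace hxa : φ x = a := hxa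
    replace hyb : φ y = b := hyb
    apply Subtype.ext
    apply Subtype.ext
    have : φ ⁅x, y⁆ = 0 := by
      ext v
      exact hN x hx y hy v
    rw [φ.map_lie, hxa, hyb] at this
    exact this
  have hle : M ≤ LieAlgebra.radical ℂ R :=
    (LieAlgebra.LieIdeal.solvable_iff_le_radical ℂ R M).1 (LieAlgebra.ofAbelianIsSolvable M)
  rw [hc.radical_eq_center] at hle
  intro x hx y v
  have h1 : (⟨φ x, ⟨x, rfl⟩⟩ : R) ∈ LieAlgebra.center ℂ R := hle ⟨x, hx, rfl⟩
  have h2 := (LieModule.mem_maxTrivSubmodule ℂ R R _).1 h1 ⟨φ y, ⟨y, rfl⟩⟩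
  have h3 : ⁅φ y, φ x⁆ = 0 := congrArg Subtype.val h2
  rw [← φ.map_lie] at h3
  exact congrArg (fun f : Module.End ℂ V => f v) h3

end

lemma loopAux_lie (B : Type) [CommRing B] [Algebra ℂ B] (g : Type) [LieRing g]
    [LieAlgebra ℂ g] (p : B) (x z : B ⊗[ℂ] g) :
    LinearMap.rTensor g (LinearMap.mulLeft ℂ p) ⁅x, z⁆ =
      ⁅x, LinearMap.rTensor g (LinearMap.mulLeft ℂ p) z⁆ := by
  induction x with
  | zero => simp
  | add u v hu hv => simp only [add_lie, map_add, hu, hv]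
  | tmul q x =>
    induction z with
    | zero => simp
    | add u v hu hv => simp only [lie_add, map_add, hu, hv]
    | tmul r y => simp [mul_left_comm]

/-- Let `g` be a finite-dimensional simple complex Lie algebra and let `V` be an
irreducible finite-dimensional module for the loop algebra `L(g) = ℂ[t,t⁻¹] ⊗ g`.
Then the annihilator `{z ∈ L(g) : z·V = 0}` equals `I ⊗ g` for some nonzero radical
ideal `I` of `ℂ[t,t⁻¹]`; equivalently, it equals `f·ℂ[t,t⁻¹] ⊗ g` where
`f = (t−a₁)⋯(t−a_k)` for some `k ≥ 0` and pairwise distinct `a₁, …, a_k ∈ ℂˣ`. -/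
theorem annihilator_of_irreducible_loopAlgebra_module (g : Type) [LieRing g]
    [LieAlgebra ℂ g] [FiniteDimensional ℂ g] [LieAlgebra.IsSimple ℂ g]
    (V : Type) [AddCommGroup V] [Module ℂ V]
    [LieRingModule (LaurentPolynomial ℂ ⊗[ℂ] g) V]
    [LieModule ℂ (LaurentPolynomial ℂ ⊗[ℂ] g) V]
    [FiniteDimensional ℂ V]
    (hV : LieModule.IsIrreducible ℂ (LaurentPolynomial ℂ ⊗[ℂ] g) V) :
    (∃ I : Ideal (LaurentPolynomial ℂ), I ≠ ⊥ ∧ I.IsRadical ∧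
      {z : LaurentPolynomial ℂ ⊗[ℂ] g | ∀ v : V, ⁅z, v⁆ = 0} =
        ↑(Submodule.span ℂ {w : LaurentPolynomial ℂ ⊗[ℂ] g |
            ∃ p ∈ I, ∃ x : g, w = p ⊗ₜ[ℂ] x})) ∧
    (∃ (k : ℕ) (a : Fin k → ℂ), Function.Injective a ∧ (∀ i, a i ≠ 0) ∧
      {z : LaurentPolynomial ℂ ⊗[ℂ] g | ∀ v : V, ⁅z, v⁆ = 0} =
        ↑(Submodule.span ℂ {w : LaurentPolynomial ℂ ⊗[ℂ] g |
            ∃ p ∈ Ideal.span {∏ i, (LaurentPolynomial.T 1 - LaurentPolynomial.C (a i))},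
              ∃ x : g, w = p ⊗ₜ[ℂ] x})) := by
  let φ := LieModule.toEnd ℂ (LaurentPolynomial ℂ ⊗[ℂ] g) V
  let J : Submodule ℂ (LaurentPolynomial ℂ ⊗[ℂ] g) :=
    LinearMap.ker (φ : (LaurentPolynomial ℂ ⊗[ℂ] g) →ₗ[ℂ] Module.End ℂ V)
  have hmemJ : ∀ z, z ∈ J ↔ ∀ v : V, ⁅z, v⁆ = 0 := by
    intro z
    change φ z = 0 ↔ _
    exact LinearMap.ext_iff
  have hJl : ∀ y z : LaurentPolynomial ℂ ⊗[ℂ] g, z ∈ J → ⁅y, z⁆ ∈ J := by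
    intro y z hz
    rw [hmemJ] at hz ⊢
    intro v
    rw [lie_lie, hz, hz, lie_zero, sub_zero]
  obtain ⟨I, hI, hJ⟩ := loopAux_ideal (LaurentPolynomial ℂ) g J hJl
  have hJset : {z : LaurentPolynomial ℂ ⊗[ℂ] g | ∀ v : V, ⁅z, v⁆ = 0} = (J : Set _) := by
    ext z
    exact (hmemJ z).symm
  have hnt : Nontrivial g := LieAlgebra.IsSimple.nontrivial ℂ g
  have hne : I ≠ ⊥ := by
    intro h
    obtain ⟨x, hx⟩ := exists_ne (0 : g)
    have hinj : Function.Injective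
        ((φ : (LaurentPolynomial ℂ ⊗[ℂ] g) →ₗ[ℂ] Module.End ℂ V) ∘ₗ
          (TensorProduct.mk ℂ (LaurentPolynomial ℂ) g).flip x) := by
      rw [LinearMap.coe_comp]
      refine Function.Injective.comp ?_ ?_
      · rw [← LinearMap.ker_eq_bot]
        change J = ⊥
        rw [hJ, h, Submodule.span_eq_bot]
        rintro _ ⟨p, hp, y, rfl⟩
        rw [Ideal.mem_bot.1 hp, TensorProduct.zero_tmul]
      · rw [← LinearMap.ker_eq_bot, LinearMap.ker_eq_bot']
        intro p hp
        obtain ⟨f, hf⟩ := Module.Projective.exists_dual_ne_zero ℂ hx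
        have := congrArg (TensorProduct.rid ℂ _ ∘ LinearMap.lTensor (LaurentPolynomial ℂ) f) hp
        simpa [hf] using this
    have hfin : FiniteDimensional ℂ (LaurentPolynomial ℂ) := FiniteDimensional.of_injective _ hinj
    have : FiniteDimensional ℂ (Polynomial ℂ) :=
      FiniteDimensional.of_injective
        (Polynomial.toLaurentAlg (R := ℂ)).toLinearMap Polynomial.toLaurent_injective
    exact Polynomial.not_finite this
  have hrad1 : ∀ p, p * p ∈ I → p ∈ I := by
    intro p hp
    let N : LieIdeal ℂ (LaurentPolynomial ℂ ⊗[ℂ] g) :=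
      { LinearMap.range (LinearMap.rTensor g (LinearMap.mulLeft ℂ p)) with
        lie_mem := by
          rintro x _ ⟨z, rfl⟩
          exact ⟨⁅x, z⁆, loopAux_lie _ _ _ _ _⟩ }
    have key := loopAux_main _ V hV N (by
      rintro _ ⟨x, rfl⟩ _ ⟨y, rfl⟩
      rw [← hmemJ]
      induction x with
      | zero => simp
      | add u v hu hv => simpa only [add_lie, map_add] using J.add_mem hu hv
      | tmul q x =>
        induction y with
        | zero => simp
        | add u v hu hv => simpa only [lie_add, map_add] using J.add_mem hu hv
        | tmul r y =>
          have : (p * q) * (p * r) ∈ I := by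
            have := I.mul_mem_right (q * r) hp
            convert this using 1
            ring
          simpa using (hI _).1 this _)
    rw [hI]
    intro x
    have htop : J.comap (TensorProduct.mk ℂ (LaurentPolynomial ℂ) g p) = ⊤ := by
      apply loopAux_perf
      intro y z
      have := key (p ⊗ₜ z) ⟨1 ⊗ₜ z, by simp⟩ (1 ⊗ₜ y)
      rw [← hmemJ] at this
      simpa using this
    have h2 : x ∈ J.comap (TensorProduct.mk ℂ (LaurentPolynomial ℂ) g p) := htop ▸ Submodule.mem_top
    exact h2
  have hrad : I.IsRadical := by
    rintro p ⟨n, hn⟩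
    have hpow : ∀ m : ℕ, p ^ 2 ^ m ∈ I → p ∈ I := by
      intro m
      induction m with
      | zero => simp
      | succ m ih =>
        intro h
        refine ih (hrad1 _ ?_)
        rwa [← pow_two, ← pow_mul, ← pow_succ]
    exact hpow n (Ideal.pow_mem_of_pow_mem _ hn Nat.lt_two_pow_self.le)
  obtain ⟨k, a, ha, ha0, hIa⟩ := loopAux_gen I hne hrad
  refine ⟨⟨I, hne, hrad, ?_⟩, k, a, ha, ha0, ?_⟩
  · rw [hJset, hJ]
  · rw [hJset, hJ, ← hIa]
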